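/- arXiv:2502.12313 — 2 statements merged into one kernel-verified Lean document; each statement's English description precedes it below -/
import Mathlib

section
/- Let F be a monotone hazard rate probability distribution supported on the non-negative reals with density f. Then Q_F ≥ V_F / 4, i.e., ∫₀^∞ z·(1−F(z))·f(z) dz ≥ (1/4)·∫₀^∞ z·f(z) dz. -/
/-!
Write `S = 1 - F`. Exchanging integrals over `a < x < y` gives `∫ S = ∫ z f(z) dz = V` and, since
`∫_x^∞ f S = S(x)² / 2`, also `∫ S² = 2 ∫ z f(z) S(z) dz = 2 Q`. The cumulative hazard `-log S` is
the integral of a monotone function vanishing at `0`, hence superadditive, so `S(2z) ≤ S(z)²`.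
Therefore `V = 2 ∫ S(2z) dz ≤ 2 ∫ S(z)² dz = 4 Q`.
-/

open MeasureTheory Real Set

/-- The wedge `a < x < y` in the plane, over which double integrals are exchanged. -/
def wedge (a : ℝ) : Set (ℝ × ℝ) := {p | a < p.1 ∧ p.1 < p.2}

theorem measurableSet_wedge (a : ℝ) : MeasurableSet (wedge a) := by
  unfold wedge
  measurability

section Wedge

variable {E : Type*} [NormedAddCommGroup E] [NormedSpace ℝ E] {μ ν : Measure ℝ}
  {k : ℝ → ℝ → E} {a : ℝ}

theorem integral_indicator_wedge_right (x : ℝ) :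
    ∫ y, (wedge a).indicator (Function.uncurry k) (x, y) ∂ν =
      (Ioi a).indicator (fun x ↦ ∫ y in Ioi x, k x y ∂ν) x := by
  by_cases hx : a < x
  · simp [wedge, indicator, hx, ← integral_indicator measurableSet_Ioi]
  · simp [wedge, indicator, hx]

theorem integral_indicator_wedge_left (y : ℝ) :
    ∫ x, (wedge a).indicator (Function.uncurry k) (x, y) ∂μ = ∫ x in Ioo a y, k x y ∂μ := by
  rw [← integral_indicator measurableSet_Ioo]
  rfl

theorem integrableOn_integral_Ioi [SFinite ν]
    (hk : IntegrableOn (Function.uncurry k) (wedge a) (μ.prod ν)) :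
    IntegrableOn (fun x ↦ ∫ y in Ioi x, k x y ∂ν) (Ioi a) μ := by
  have hmarginal := ((integrable_indicator_iff (measurableSet_wedge a)).2 hk).integral_prod_left
  simpa only [integral_indicator_wedge_right, integrable_indicator_iff measurableSet_Ioi]
    using hmarginal

theorem integral_Ioi_integral_Ioi_swap [SFinite μ] [SFinite ν]
    (hk : IntegrableOn (Function.uncurry k) (wedge a) (μ.prod ν)) :
    ∫ x in Ioi a, ∫ y in Ioi x, k x y ∂ν ∂μ = ∫ y in Ioi a, ∫ x in Ioo a y, k x y ∂μ ∂ν := by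
  have hswap := integral_integral_swap
    (f := fun x y ↦ (wedge a).indicator (Function.uncurry k) (x, y))
    ((integrable_indicator_iff (measurableSet_wedge a)).2 hk)
  simp only [integral_indicator_wedge_right, integral_indicator_wedge_left,
    integral_indicator measurableSet_Ioi] at hswap
  rw [hswap, setIntegral_eq_integral_of_forall_compl_eq_zero fun y hy ↦ by simp_all]

theorem integrableOn_wedge_snd {g : ℝ → ℝ} (hg : IntegrableOn g (Ioi a))
    (hmean : IntegrableOn (fun y ↦ (y - a) * g y) (Ioi a)) :
    IntegrableOn (Function.uncurry fun _ y ↦ g y) (wedge a) := by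
  have hsubset : wedge a ⊆ univ ×ˢ Ioi a := fun _ hp ↦ ⟨trivial, hp.1.trans hp.2⟩
  have hmeas : AEStronglyMeasurable (Function.uncurry fun _ y ↦ g y)
      (volume.restrict (wedge a)) := by
    have hprod : AEStronglyMeasurable (Function.uncurry fun (_ : ℝ) y ↦ g y)
        (volume.restrict (univ ×ˢ Ioi a)) := by
      rw [Measure.volume_eq_prod, ← Measure.prod_restrict]
      exact hg.aestronglyMeasurable.comp_snd
    exact hprod.mono_measure (Measure.restrict_mono hsubset le_rfl)
  rw [← integrable_indicator_iff (measurableSet_wedge a), Measure.volume_eq_prod,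
    integrable_prod_iff' ((aestronglyMeasurable_indicator_iff (measurableSet_wedge a)).2 hmeas)]
  refine ⟨.of_forall fun y ↦ ?_, ?_⟩
  · change Integrable ((Ioo a y).indicator fun _ ↦ g y)
    simp [integrable_indicator_iff measurableSet_Ioo]
  · have hsection (y : ℝ) :
        ∫ x, ‖(wedge a).indicator (Function.uncurry fun _ y ↦ g y) (x, y)‖ =
          (Ioi a).indicator (fun y ↦ ‖(y - a) * g y‖) y := by
      change ∫ x, ‖(Ioo a y).indicator (fun _ ↦ g y) x‖ = _
      simp_rw [norm_indicator_eq_indicator_norm]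
      rw [integral_indicator_const _ measurableSet_Ioo]
      by_cases hy : a < y
      · simp [hy, hy.le, abs_of_nonneg (sub_nonneg.2 hy.le)]
      · simp [hy]
    simp only [hsection]
    exact (integrable_indicator_iff measurableSet_Ioi).2 hmean.norm

end Wedge

/-- The survival function of the density `f`, i.e. `1 - F` when `f` has total mass one. Only the
values of `f` to the right of `x` enter, so a density need not be extended by zero. -/
noncomputable def survival (f : ℝ → ℝ) (x : ℝ) : ℝ := ∫ t in Ioi x, f t

/-- The hazard rate of the density `f`. It is `0` where the survival function vanishes, so
monotonicity is only ever required where the survival function is positive. -/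
noncomputable def hazardRate (f : ℝ → ℝ) (x : ℝ) : ℝ := f x / survival f x

section Survival

variable {f : ℝ → ℝ} {a : ℝ}

theorem survival_nonneg (hf : ∀ t ∈ Ioi a, 0 ≤ f t) : 0 ≤ survival f a :=
  setIntegral_nonneg measurableSet_Ioi hf

theorem antitoneOn_survival (hf : ∀ t ∈ Ioi a, 0 ≤ f t) (hint : IntegrableOn f (Ioi a)) :
    AntitoneOn (survival f) (Ici a) := fun _ hx _ _ hxy ↦
  setIntegral_mono_set (hint.mono_set (Ioi_subset_Ioi hx))
    (ae_restrict_of_forall_mem measurableSet_Ioi fun t ht ↦ hf t ((mem_Ici.1 hx).trans_lt ht))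
    (Ioi_subset_Ioi hxy).eventuallyLE

theorem hasDerivAt_survival (hint : IntegrableOn f (Ioi a)) {x : ℝ} (hx : a < x)
    (hf : ContinuousAt f x) : HasDerivAt (survival f) (-f x) x := by
  have hprim : HasDerivAt (fun u ↦ ∫ t in a..u, f t) (f x) x :=
    intervalIntegral.integral_hasDerivAt_right
      ((intervalIntegrable_iff_integrableOn_Ioc_of_le hx.le).2 (hint.mono_set Ioc_subset_Ioi_self))
      ⟨Ioi a, Ioi_mem_nhds hx, hint.aestronglyMeasurable⟩ hf
  refine (hprim.const_sub (survival f a)).congr_of_eventuallyEq ?_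
  filter_upwards [Ioi_mem_nhds hx] with u hu
  simp only [survival, ← intervalIntegral.integral_Ioi_sub_Ioi hint (le_of_lt hu), sub_sub_cancel]

theorem continuousAt_of_hazardRate (hint : IntegrableOn f (Ioi a)) {x : ℝ} (hx : a < x)
    (hS : survival f x ≠ 0) (hh : ContinuousAt (hazardRate f) x) : ContinuousAt f x := by
  have hcont : ContinuousAt (survival f) x :=
    hint.continuousOn_Ici_primitive_Ioi.continuousAt (Ici_mem_nhds hx)
  refine (hh.mul hcont).congr ?_
  filter_upwards [hcont.eventually_ne hS] with u hu using div_mul_cancel₀ _ hu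

/- The density may jump, but a monotone hazard rate has countably many discontinuities, and away
from them `-log S` is differentiable with derivative `f / S`. -/
theorem integral_hazardRate {b : ℝ} (hab : a ≤ b) (hint : IntegrableOn f (Ioi a))
    (hS : ∀ x ∈ Icc a b, survival f x ≠ 0) (hh : MonotoneOn (hazardRate f) (Icc a b)) :
    ∫ x in a..b, hazardRate f x = log (survival f a) - log (survival f b) := by
  have hderiv : ∀ x ∈ Ioo a b \ {x ∈ Icc a b | ¬ContinuousWithinAt (hazardRate f) (Icc a b) x},
      HasDerivAt (fun x ↦ -log (survival f x)) (hazardRate f x) x := by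
    intro x ⟨hx, hcont⟩
    have hxI := Ioo_subset_Icc_self hx
    have hh : ContinuousAt (hazardRate f) x := by
      by_contra h
      exact hcont ⟨hxI, fun hc ↦ h (hc.continuousAt (Icc_mem_nhds hx.1 hx.2))⟩
    have hf := continuousAt_of_hazardRate hint hx.1 (hS x hxI) hh
    exact ((hasDerivAt_survival hint hx.1 hf).log (hS x hxI)).fun_neg.congr_deriv
      (by rw [hazardRate, neg_div, neg_neg])
  have hcont : ContinuousOn (fun x ↦ -log (survival f x)) (Icc a b) :=
    ((hint.continuousOn_Ici_primitive_Ioi.mono Icc_subset_Ici_self).log hS).neg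
  rw [integral_eq_of_hasDerivAt_off_countable_of_le _ _ hab hh.countable_not_continuousWithinAt
    hcont hderiv (MonotoneOn.intervalIntegrable (by rwa [uIcc_of_le hab]))]
  ring

theorem integral_le_integral_add_of_monotoneOn {h : ℝ → ℝ} {a b t : ℝ} (hab : a ≤ b) (ht : 0 ≤ t)
    (hh : MonotoneOn h (Icc a (b + t))) : ∫ x in a..b, h x ≤ ∫ x in (a + t)..(b + t), h x := by
  have hleft : uIcc a b ⊆ Icc a (b + t) := by
    rw [uIcc_of_le hab]
    exact Icc_subset_Icc le_rfl (by linarith)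
  have hshift : ∀ x ∈ Icc a b, x + t ∈ Icc a (b + t) := fun x hx ↦
    ⟨by linarith [hx.1], by linarith [hx.2]⟩
  have hshift_mono : MonotoneOn (fun x ↦ h (x + t)) (uIcc a b) := by
    rw [uIcc_of_le hab]
    exact fun x hx y hy hxy ↦ hh (hshift x hx) (hshift y hy) (by linarith)
  rw [← intervalIntegral.integral_comp_add_right h t]
  exact intervalIntegral.integral_mono_on hab (hh.mono hleft).intervalIntegrable
    hshift_mono.intervalIntegrable fun x hx ↦
      hh (hleft (uIcc_of_le hab ▸ hx)) (hshift x hx) (by linarith)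

theorem survival_add_mul_survival_le (hf : ∀ t ∈ Ioi a, 0 ≤ f t) (hint : IntegrableOn f (Ioi a))
    (hh : MonotoneOn (hazardRate f) {x ∈ Ici a | 0 < survival f x}) {s t : ℝ}
    (hs : 0 ≤ s) (ht : 0 ≤ t) :
    survival f (a + t + s) * survival f a ≤ survival f (a + t) * survival f (a + s) := by
  have hnonneg {u : ℝ} (hu : a ≤ u) : 0 ≤ survival f u :=
    survival_nonneg fun x hx ↦ hf x (hu.trans_lt hx)
  rcases (hnonneg (show a ≤ a + t + s by linarith)).eq_or_lt with hzero | hpos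
  · rw [← hzero, zero_mul]
    exact mul_nonneg (hnonneg (by linarith)) (hnonneg (by linarith))
  have hSpos {u : ℝ} (hu : u ∈ Icc a (a + t + s)) : 0 < survival f u :=
    hpos.trans_le (antitoneOn_survival hf hint hu.1 (hu.1.trans hu.2) hu.2)
  have hmono : MonotoneOn (hazardRate f) (Icc a (a + t + s)) :=
    hh.mono fun u hu ↦ ⟨hu.1, hSpos hu⟩
  have hlog {u v : ℝ} (hau : a ≤ u) (huv : u ≤ v) (hv : v ≤ a + t + s) :
      ∫ x in u..v, hazardRate f x = log (survival f u) - log (survival f v) :=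
    integral_hazardRate huv (hint.mono_set (Ioi_subset_Ioi hau))
      (fun x hx ↦ (hSpos (Icc_subset_Icc hau hv hx)).ne') (hmono.mono (Icc_subset_Icc hau hv))
  have hcumul := integral_le_integral_add_of_monotoneOn (b := a + s) (by linarith) ht
    (hmono.mono (Icc_subset_Icc le_rfl (by linarith)))
  rw [add_right_comm, hlog le_rfl (by linarith) (by linarith),
    hlog (by linarith) (by linarith) le_rfl] at hcumul
  have ha := hSpos (u := a) ⟨le_rfl, by linarith⟩
  have has := hSpos (u := a + s) ⟨by linarith, by linarith⟩
  have hat := hSpos (u := a + t) ⟨by linarith, by linarith⟩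
  rw [← log_le_log_iff (mul_pos hpos ha) (mul_pos hat has), log_mul hpos.ne' ha.ne',
    log_mul hat.ne' has.ne']
  linarith

theorem integrableOn_mul_survival (hf : IntegrableOn f (Ioi a)) {g : ℝ → ℝ}
    (hg : IntegrableOn g (Ioi a)) : IntegrableOn (fun x ↦ g x * survival f x) (Ioi a) := by
  have hcont : ContinuousOn (survival f) (Ioi a) :=
    hf.continuousOn_Ici_primitive_Ioi.mono Ioi_subset_Ici_self
  refine Integrable.mul_bdd (c := ∫ t in Ioi a, ‖f t‖) hg
    (hcont.aestronglyMeasurable measurableSet_Ioi)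
    (ae_restrict_of_forall_mem measurableSet_Ioi fun x hx ↦ ?_)
  exact (norm_integral_le_integral_norm f).trans (setIntegral_mono_set hf.norm
    (.of_forall fun t ↦ norm_nonneg (f t)) (Ioi_subset_Ioi (le_of_lt hx)).eventuallyLE)

theorem integrableOn_survival (hf : IntegrableOn f (Ioi a))
    (hmean : IntegrableOn (fun x ↦ (x - a) * f x) (Ioi a)) : IntegrableOn (survival f) (Ioi a) :=
  integrableOn_integral_Ioi (integrableOn_wedge_snd hf hmean)

theorem integral_survival (hf : IntegrableOn f (Ioi a))
    (hmean : IntegrableOn (fun x ↦ (x - a) * f x) (Ioi a)) :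
    ∫ x in Ioi a, survival f x = ∫ x in Ioi a, (x - a) * f x := by
  refine (integral_Ioi_integral_Ioi_swap (integrableOn_wedge_snd hf hmean)).trans ?_
  refine setIntegral_congr_fun measurableSet_Ioi fun y hy ↦ ?_
  simp [(mem_Ioi.1 hy).le]

theorem integral_mul_survival (hf : IntegrableOn f (Ioi a)) :
    ∫ x in Ioi a, f x * survival f x = survival f a ^ 2 / 2 := by
  have hprod : IntegrableOn (Function.uncurry fun x y ↦ f x * f y) (wedge a) := by
    have hquadrant : IntegrableOn (Function.uncurry fun x y ↦ f x * f y) (Ioi a ×ˢ Ioi a) := by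
      rw [IntegrableOn, Measure.volume_eq_prod, ← Measure.prod_restrict]
      exact hf.mul_prod hf
    exact hquadrant.mono_set fun _ hp ↦ ⟨hp.1, hp.1.trans hp.2⟩
  have hinner (y : ℝ) (hy : a < y) :
      ∫ x in Ioo a y, f x * f y = survival f a * f y - f y * survival f y := by
    rw [integral_mul_const, ← integral_Ioc_eq_integral_Ioo,
      ← intervalIntegral.integral_of_le hy.le,
      ← intervalIntegral.integral_Ioi_sub_Ioi hf hy.le, sub_mul, mul_comm (f y)]
    rfl
  have hself : ∫ x in Ioi a, f x * survival f x =
      survival f a ^ 2 - ∫ y in Ioi a, f y * survival f y := by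
    calc ∫ x in Ioi a, f x * survival f x
        = ∫ x in Ioi a, ∫ y in Ioi x, f x * f y := by simp only [integral_const_mul, survival]
      _ = ∫ y in Ioi a, ∫ x in Ioo a y, f x * f y := integral_Ioi_integral_Ioi_swap hprod
      _ = ∫ y in Ioi a, (survival f a * f y - f y * survival f y) :=
        setIntegral_congr_fun measurableSet_Ioi hinner
      _ = survival f a ^ 2 - ∫ y in Ioi a, f y * survival f y := by
        rw [integral_sub (hf.const_mul _) (integrableOn_mul_survival hf hf), integral_const_mul,
          ← survival, sq]
  linarith

theorem integral_survival_sq (hf : IntegrableOn f (Ioi a))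
    (hmean : IntegrableOn (fun x ↦ (x - a) * f x) (Ioi a)) :
    ∫ x in Ioi a, survival f x ^ 2 = 2 * ∫ x in Ioi a, (x - a) * (f x * survival f x) := by
  have hrevenue : IntegrableOn (fun x ↦ (x - a) * (f x * survival f x)) (Ioi a) := by
    simpa only [mul_assoc] using integrableOn_mul_survival hf hmean
  rw [← integral_survival (integrableOn_mul_survival hf hf) hrevenue, ← integral_const_mul]
  refine setIntegral_congr_fun measurableSet_Ioi fun x hx ↦ ?_
  have htail := integral_mul_survival (hf.mono_set (Ioi_subset_Ioi (le_of_lt hx)))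
  simp only [survival] at htail ⊢
  linarith

theorem survival_zero_mul_mean_le_of_survival_two_mul (hint : IntegrableOn f (Ioi 0))
    (hmean : IntegrableOn (fun x ↦ x * f x) (Ioi 0))
    (hdouble : ∀ x, 0 < x → survival f (2 * x) * survival f 0 ≤ survival f x ^ 2) :
    survival f 0 * ∫ x in Ioi 0, x * f x ≤ 4 * ∫ x in Ioi 0, x * (f x * survival f x) := by
  have hmean' : IntegrableOn (fun x ↦ (x - 0) * f x) (Ioi 0) := by simpa only [sub_zero] using hmean
  have hS := integrableOn_survival hint hmean'
  have hSsq : IntegrableOn (fun x ↦ survival f x ^ 2) (Ioi 0) := by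
    simpa only [sq] using integrableOn_mul_survival hint hS
  have hSdouble : IntegrableOn (fun x ↦ survival f (2 * x)) (Ioi 0) := by
    simpa only [mul_zero] using
      (integrableOn_Ioi_comp_mul_left_iff (survival f) 0 two_pos).2
      (by simpa only [mul_zero] using hS)
  have hV := integral_survival hint hmean'
  have hQ := integral_survival_sq hint hmean'
  simp only [sub_zero] at hV hQ
  calc survival f 0 * ∫ x in Ioi 0, x * f x
      = 2 * ∫ x in Ioi 0, survival f (2 * x) * survival f 0 := by
        rw [← hV, integral_mul_const, integral_comp_mul_left_Ioi (survival f) 0 two_pos, mul_zero,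
          smul_eq_mul]
        ring
    _ ≤ 2 * ∫ x in Ioi 0, survival f x ^ 2 := by
        gcongr 2 * ?_
        exact setIntegral_mono_on (hSdouble.mul_const _) hSsq measurableSet_Ioi hdouble
    _ = 4 * ∫ x in Ioi 0, x * (f x * survival f x) := by
        rw [hQ]
        ring

end Survival

theorem stmt_0_general (f F : ℝ → ℝ) (hf_nonneg : ∀ z ∈ Ici (0 : ℝ), 0 ≤ f z)
    (hF : ∀ z ∈ Ici (0 : ℝ), F z = ∫ t in (0 : ℝ)..z, f t)
    (hprob : ∫ z in Ioi (0 : ℝ), f z = 1)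
    (hMHR : MonotoneOn (fun z ↦ f z / (1 - F z)) {z ∈ Ici 0 | F z < 1})
    (hmean : IntegrableOn (fun z ↦ z * f z) (Ioi 0)) :
    ∫ z in Ioi (0 : ℝ), z * (1 - F z) * f z ≥ (1 / 4) * ∫ z in Ioi (0 : ℝ), z * f z := by
  have hint : IntegrableOn f (Ioi 0) := not_imp_comm.1 integral_undef (by simp [hprob])
  have hsurvival : ∀ z ∈ Ici (0 : ℝ), survival f z = 1 - F z := fun z hz ↦ by
    rw [hF z hz, ← intervalIntegral.integral_Ioi_sub_Ioi hint hz, hprob, sub_sub_cancel, survival]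
  have hhazard : MonotoneOn (hazardRate f) {z ∈ Ici 0 | 0 < survival f z} := by
    refine (hMHR.mono fun z hz ↦ ⟨hz.1, ?_⟩).congr fun z hz ↦ ?_
    · linarith [hz.2, hsurvival z hz.1]
    · simp only [hazardRate, hsurvival z hz.1]
  have hdouble (z : ℝ) (hz : 0 < z) : survival f (2 * z) * survival f 0 ≤ survival f z ^ 2 := by
    simpa only [zero_add, ← two_mul, ← sq] using
      survival_add_mul_survival_le (fun x hx ↦ hf_nonneg x (Ioi_subset_Ici_self hx)) hint
        hhazard hz.le hz.le
  have hQ : ∫ z in Ioi 0, z * (1 - F z) * f z = ∫ z in Ioi 0, z * (f z * survival f z) :=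
    setIntegral_congr_fun measurableSet_Ioi fun z hz ↦ by
      rw [hsurvival z (Ioi_subset_Ici_self hz)]
      ring
  have hbound := survival_zero_mul_mean_le_of_survival_two_mul hint hmean hdouble
  rw [survival, hprob] at hbound
  linarith

theorem stmt_0
(f F : ℝ → ℝ)
    (hf_cont : ContinuousOn f (Ici 0))
    (hf_pos : ∀ z ∈ Ici (0:ℝ), 0 < f z)
    (hF : ∀ z ∈ Ici (0:ℝ), F z = ∫ t in (0:ℝ)..z, f t)
    (hF_lt : ∀ z ∈ Ici (0:ℝ), F z < 1)
    (hprob : ∫ z in Ioi (0:ℝ), f z = 1)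
(hMHR : ∀ y z : ℝ, 0 ≤ y → y ≤ z → f y / (1 - F y) ≤ f z / (1 - F z))
(hmean : IntegrableOn (fun z => z * f z) (Ioi 0)) :
    ∫ z in Ioi (0:ℝ), z * (1 - F z) * f z ≥ (1/4) * ∫ z in Ioi (0:ℝ), z * f z :=
  stmt_0_general f F (fun z hz ↦ (hf_pos z hz).le) hF hprob
    (fun y hy z _ hyz ↦ hMHR y z hy.1 hyz) hmean
end

section
/- Let F be a monotone hazard rate probability distribution supported on the non-negative reals with density f and strictly increasing virtual valuation φ. Then R^1_F ≥ A_F + (3/(4e))·V_F, where R^1_F = ∫₀^∞ (φ⁻¹(z)·(1−F(φ⁻¹(z))) + F(φ⁻¹(z))·R*_F)·f(z) dz. -/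
open MeasureTheory Real Set

/-!
The survival function `S = 1 - F` of a monotone-hazard-rate distribution is log-concave, so it lies
below the exponential tangent to it at any point `p`, whose rate is the hazard rate at `p`. A price
`p = φ⁻¹(y)` has hazard rate `1 / (p - y)`, and the tangents at such prices give `S y ≤ e · S p`,
`q · S q ≤ r · S r = R*` for every price `q`, and `V = ∫ S ≤ e · R*`, where `r = φ⁻¹(0)`.

What `M₁` earns beyond `A` on a sample `z` with price `p = φ⁻¹(z)`, the *excess*, is
`z · S p + (1 - S p) · R*`, which is at least `e⁻¹ · z · S z + (1 - S z) · R*`. Integrating this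
bound against `f = -S'` by parts gives `e⁻¹ / 2 · ∫ S² + R* / 2`. Log-concavity also gives
`S (2z) ≤ S z ^ 2`, hence `∫ S² ≥ V / 2`, so the two terms are at least `V / (4e)` and `V / (2e)`.
-/

/-- `S` is the survival function and `f` the positive density of a probability distribution on
`[0, ∞)` with unbounded support and monotone hazard rate `f / S`. Values at negative arguments are
unconstrained, so the derivative is taken within `[0, ∞)`. -/
structure IsMHRSurvival (S f : ℝ → ℝ) : Prop where
  survival_zero : S 0 = 1
  survival_pos : ∀ x, 0 ≤ x → 0 < S x
  density_pos : ∀ x, 0 ≤ x → 0 < f x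
  hasDerivWithinAt : ∀ x, 0 ≤ x → HasDerivWithinAt S (-f x) (Ici 0) x
  monotoneOn_hazard : MonotoneOn (fun x => f x / S x) (Ici 0)

/-- `p` is a nonnegative price whose virtual value, for a buyer with survival function `S` and
density `f`, is `y`: the monopoly price of a seller with opportunity cost `y`. -/
structure IsMonopolyPrice (S f : ℝ → ℝ) (y p : ℝ) : Prop where
  nonneg : 0 ≤ p
  virtualValue_eq : p - S p / f p = y

theorem isMHRSurvival_one_sub_cdf {f F : ℝ → ℝ} (hf_cont : ContinuousOn f (Ici 0))
    (hf_pos : ∀ z ∈ Ici (0 : ℝ), 0 < f z)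
    (hF : ∀ z ∈ Ici (0 : ℝ), F z = ∫ t in (0 : ℝ)..z, f t)
    (hF_lt : ∀ z ∈ Ici (0 : ℝ), F z < 1)
    (hMHR : ∀ y z : ℝ, 0 ≤ y → y ≤ z → f y / (1 - F y) ≤ f z / (1 - F z)) :
    IsMHRSurvival (fun z => 1 - F z) f where
  survival_zero := by simp [hF 0 self_mem_Ici]
  survival_pos x hx := sub_pos.2 (hF_lt x hx)
  density_pos := hf_pos
  hasDerivWithinAt x hx := by
    let g : ℝ → ℝ := fun t => f (max t 0)
    have hg_cont : Continuous g :=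
      hf_cont.comp_continuous (by fun_prop) fun t => le_max_right t 0
    have hg_eq : ∀ t, 0 ≤ t → f t = g t := fun t ht => by simp only [g, max_eq_left ht]
    have hF_eq : ∀ z, 0 ≤ z → F z = ∫ t in (0 : ℝ)..z, g t := fun z hz =>
      (hF z hz).trans <| intervalIntegral.integral_congr fun t ht =>
        hg_eq t (by rw [uIcc_of_le hz] at ht; exact ht.1)
    rw [hg_eq x hx]
    exact ((hg_cont.integral_hasStrictDerivAt 0 x).hasDerivAt.hasDerivWithinAt.congr
      hF_eq (hF_eq x hx)).const_sub 1
  monotoneOn_hazard y hy z _ hyz := hMHR y z hy hyz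

namespace IsMHRSurvival

open Filter Asymptotics
open scoped Topology

variable {S f : ℝ → ℝ}

theorem continuousOn (hS : IsMHRSurvival S f) : ContinuousOn S (Ici 0) :=
  fun x hx => (hS.hasDerivWithinAt x hx).continuousWithinAt

theorem hasDerivAt (hS : IsMHRSurvival S f) {x : ℝ} (hx : 0 < x) : HasDerivAt S (-f x) x :=
  (hS.hasDerivWithinAt x hx.le).hasDerivAt (Ici_mem_nhds hx)

theorem antitoneOn (hS : IsMHRSurvival S f) : AntitoneOn S (Ici 0) := by
  refine antitoneOn_of_hasDerivWithinAt_nonpos (f' := fun x => -f x) (convex_Ici 0)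
    hS.continuousOn (fun x hx => ?_) fun x hx => ?_ <;> rw [interior_Ici] at hx
  · exact (hS.hasDerivAt hx).hasDerivWithinAt
  · exact neg_nonpos.2 (hS.density_pos x (mem_Ioi.1 hx).le).le

theorem survival_le_one (hS : IsMHRSurvival S f) {x : ℝ} (hx : 0 ≤ x) : S x ≤ 1 :=
  hS.survival_zero ▸ hS.antitoneOn self_mem_Ici hx hx

theorem norm_survival_le_one (hS : IsMHRSurvival S f) {x : ℝ} (hx : 0 ≤ x) : ‖S x‖ ≤ 1 := by
  rw [norm_of_nonneg (hS.survival_pos x hx).le]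
  exact hS.survival_le_one hx

theorem hasDerivWithinAt_log (hS : IsMHRSurvival S f) {x : ℝ} (hx : 0 ≤ x) :
    HasDerivWithinAt (fun x => log (S x)) (-(f x / S x)) (Ici 0) x := by
  simpa only [neg_div] using (hS.hasDerivWithinAt x hx).log (hS.survival_pos x hx).ne'

theorem concaveOn_log (hS : IsMHRSurvival S f) : ConcaveOn ℝ (Ici 0) fun x => log (S x) := by
  have hasDerivAt_log : ∀ x, 0 < x → HasDerivAt (fun x => log (S x)) (-(f x / S x)) x :=
    fun x hx => (hS.hasDerivWithinAt_log hx.le).hasDerivAt (Ici_mem_nhds hx)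
  refine AntitoneOn.concaveOn_of_deriv (convex_Ici 0)
    (fun x hx => (hS.hasDerivWithinAt_log hx).continuousWithinAt) ?_ ?_ <;> rw [interior_Ici]
  · exact fun x hx => (hasDerivAt_log x hx).differentiableAt.differentiableWithinAt
  · intro x hx y hy hxy
    rw [(hasDerivAt_log x hx).deriv, (hasDerivAt_log y hy).deriv]
    exact neg_le_neg (hS.monotoneOn_hazard (mem_Ioi.1 hx).le (mem_Ioi.1 hy).le hxy)

theorem survival_le_mul_exp_hazard (hS : IsMHRSurvival S f) {p q : ℝ} (hp : 0 ≤ p) (hq : 0 ≤ q) :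
    S q ≤ S p * exp (f p / S p * (p - q)) := by
  have tangent : log (S q) ≤ log (S p) + f p / S p * (p - q) := by
    rcases lt_trichotomy q p with hqp | rfl | hpq
    · have := hS.concaveOn_log.le_slope_of_hasDerivWithinAt hq hp hqp (hS.hasDerivWithinAt_log hp)
      rw [slope_def_field, le_div_iff₀ (sub_pos.2 hqp)] at this
      linarith
    · simp
    · have := hS.concaveOn_log.slope_le_of_hasDerivWithinAt hp hq hpq (hS.hasDerivWithinAt_log hp)
      rw [slope_def_field, div_le_iff₀ (sub_pos.2 hpq)] at this
      linarith
  calc S q = exp (log (S q)) := (exp_log (hS.survival_pos q hq)).symm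
    _ ≤ exp (log (S p) + f p / S p * (p - q)) := exp_le_exp.2 tangent
    _ = S p * exp (f p / S p * (p - q)) := by rw [exp_add, exp_log (hS.survival_pos p hp)]

theorem survival_mul_survival_le_sq_midpoint (hS : IsMHRSurvival S f) {a b : ℝ} (ha : 0 ≤ a)
    (hb : 0 ≤ b) : S a * S b ≤ S ((a + b) / 2) ^ 2 := by
  set m := (a + b) / 2 with hm
  have hm_nonneg : 0 ≤ m := by positivity
  calc S a * S b
      ≤ S m * exp (f m / S m * (m - a)) * (S m * exp (f m / S m * (m - b))) :=
        mul_le_mul (hS.survival_le_mul_exp_hazard hm_nonneg ha)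
          (hS.survival_le_mul_exp_hazard hm_nonneg hb) (hS.survival_pos b hb).le
          (mul_nonneg (hS.survival_pos m hm_nonneg).le (exp_pos _).le)
    _ = S m ^ 2 * exp (f m / S m * (m - a) + f m / S m * (m - b)) := by rw [exp_add]; ring
    _ = S m ^ 2 := by
        rw [← mul_add, show m - a + (m - b) = 0 by rw [hm]; ring, mul_zero, exp_zero, mul_one]

theorem survival_le_exp_neg (hS : IsMHRSurvival S f) {x : ℝ} (hx : 0 ≤ x) :
    S x ≤ exp (-f 0 * x) := by
  simpa [hS.survival_zero] using hS.survival_le_mul_exp_hazard le_rfl hx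

theorem isBigO_exp_neg (hS : IsMHRSurvival S f) : S =O[atTop] fun x => exp (-f 0 * x) := by
  refine .of_bound 1 ?_
  filter_upwards [eventually_ge_atTop 0] with x hx
  rw [one_mul, norm_of_nonneg (hS.survival_pos x hx).le, norm_of_nonneg (exp_pos _).le]
  exact hS.survival_le_exp_neg hx

theorem integrableOn_survival (hS : IsMHRSurvival S f) : IntegrableOn S (Ioi 0) :=
  integrable_of_isBigO_exp_neg (hS.density_pos 0 le_rfl) hS.continuousOn hS.isBigO_exp_neg

theorem tendsto_mul_survival (hS : IsMHRSurvival S f) :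
    Tendsto (fun x => x * S x) atTop (𝓝 0) := by
  refine ((isBigO_refl id atTop).mul hS.isBigO_exp_neg).trans_tendsto ?_
  simpa only [rpow_one, id_eq] using
    tendsto_rpow_mul_exp_neg_mul_atTop_nhds_zero 1 (f 0) (hS.density_pos 0 le_rfl)

theorem tendsto_survival (hS : IsMHRSurvival S f) : Tendsto S atTop (𝓝 0) := by
  refine hS.isBigO_exp_neg.trans_tendsto ?_
  simpa only [rpow_zero, one_mul] using
    tendsto_rpow_mul_exp_neg_mul_atTop_nhds_zero 0 (f 0) (hS.density_pos 0 le_rfl)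

theorem integrableOn_survival_comp_mul (hS : IsMHRSurvival S f) {ψ g : ℝ → ℝ}
    (hψ_mono : MonotoneOn ψ (Ici 0)) (hψ_maps : MapsTo ψ (Ici 0) (Ici 0))
    (hg : IntegrableOn g (Ioi 0)) : IntegrableOn (fun z => S (ψ z) * g z) (Ioi 0) := by
  have hSψ_anti : AntitoneOn (fun z => S (ψ z)) (Ici 0) :=
    hS.antitoneOn.comp_MonotoneOn hψ_mono hψ_maps
  refine Integrable.bdd_mul (c := 1) hg (aemeasurable_restrict_of_antitoneOn measurableSet_Ioi
    (hSψ_anti.mono Ioi_subset_Ici_self)).aestronglyMeasurable ?_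
  filter_upwards [ae_restrict_mem measurableSet_Ioi] with z hz
  exact hS.norm_survival_le_one (hψ_maps (mem_Ioi.1 hz).le)

theorem integrableOn_survival_pow_mul (hS : IsMHRSurvival S f) {g : ℝ → ℝ}
    (hg : IntegrableOn g (Ioi 0)) (n : ℕ) : IntegrableOn (fun z => S z ^ n * g z) (Ioi 0) := by
  refine Integrable.bdd_mul (c := 1) hg
    (((hS.continuousOn.mono Ioi_subset_Ici_self).pow n).aestronglyMeasurable measurableSet_Ioi) ?_
  filter_upwards [ae_restrict_mem measurableSet_Ioi] with z hz
  rw [norm_pow]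
  exact pow_le_one₀ (norm_nonneg _) (hS.norm_survival_le_one (mem_Ioi.1 hz).le)

theorem hasDerivAt_survival_pow_succ (hS : IsMHRSurvival S f) (n : ℕ) {x : ℝ} (hx : 0 < x) :
    HasDerivAt (fun x => S x ^ (n + 1)) (-((n + 1) * (S x ^ n * f x))) x :=
  ((hS.hasDerivAt hx).fun_pow (n + 1)).congr_deriv (by push_cast [Nat.add_sub_cancel]; ring)

theorem integrableOn_density (hS : IsMHRSurvival S f) : IntegrableOn f (Ioi 0) :=
  integrableOn_Ioi_deriv_of_nonneg (g := fun x => -S x)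
    (hS.continuousOn.neg 0 self_mem_Ici)
    (fun _ hx => (hS.hasDerivAt hx).neg.congr_deriv (neg_neg _))
    (fun x hx => (hS.density_pos x (mem_Ioi.1 hx).le).le) hS.tendsto_survival.neg

theorem integral_survival_pow_mul_density (hS : IsMHRSurvival S f) (n : ℕ) :
    ∫ z in Ioi (0 : ℝ), S z ^ n * f z = 1 / (n + 1) := by
  have hlim : Tendsto (fun z => S z ^ (n + 1)) atTop (𝓝 0) := by
    simpa using hS.tendsto_survival.pow (n + 1)
  have := integral_Ioi_of_hasDerivAt_of_tendsto (f := fun z => S z ^ (n + 1))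
    ((hS.continuousOn.pow (n + 1)) 0 self_mem_Ici)
    (fun _ hx => hS.hasDerivAt_survival_pow_succ n hx)
    ((hS.integrableOn_survival_pow_mul hS.integrableOn_density n).const_mul (n + 1)).neg hlim
  rw [integral_neg, integral_const_mul, hS.survival_zero, one_pow, zero_sub, neg_inj] at this
  exact eq_one_div_of_mul_eq_one_right this

theorem integral_survival_pow_mul_id_mul_density (hS : IsMHRSurvival S f)
    (hmean : IntegrableOn (fun z => z * f z) (Ioi 0)) (n : ℕ) :
    ∫ z in Ioi (0 : ℝ), S z ^ n * (z * f z) = (∫ z in Ioi (0 : ℝ), S z ^ (n + 1)) / (n + 1) := by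
  have hlim : Tendsto (fun z => z * S z ^ (n + 1)) atTop (𝓝 0) := by
    simpa [pow_succ', mul_assoc] using hS.tendsto_mul_survival.mul (hS.tendsto_survival.pow n)
  have hderiv : ∀ x ∈ Ioi (0 : ℝ), HasDerivAt (fun z => z * S z ^ (n + 1))
      (S x ^ (n + 1) - (n + 1) * (S x ^ n * (x * f x))) x := fun x hx =>
    ((hasDerivAt_id x).mul (hS.hasDerivAt_survival_pow_succ n hx)).congr_deriv
      (by simp only [id_eq]; ring)
  have hint_pow : IntegrableOn (fun z => S z ^ (n + 1)) (Ioi 0) := by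
    simpa only [pow_succ] using hS.integrableOn_survival_pow_mul hS.integrableOn_survival n
  have hint_density := (hS.integrableOn_survival_pow_mul hmean n).const_mul ((n : ℝ) + 1)
  have := integral_Ioi_of_hasDerivAt_of_tendsto (f := fun z => z * S z ^ (n + 1))
    ((continuousOn_id.mul (hS.continuousOn.pow (n + 1))) 0 self_mem_Ici) hderiv
    (hint_pow.sub hint_density) hlim
  rw [integral_sub hint_pow hint_density, integral_const_mul, zero_mul, sub_zero] at this
  rw [eq_div_iff (by positivity)]
  linarith

theorem half_integral_survival_le_integral_sq (hS : IsMHRSurvival S f) :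
    (∫ z in Ioi (0 : ℝ), S z) / 2 ≤ ∫ z in Ioi (0 : ℝ), S z ^ 2 := by
  have hint_sq : IntegrableOn (fun z => S z ^ 2) (Ioi 0) := by
    simpa only [sq, pow_one] using hS.integrableOn_survival_pow_mul hS.integrableOn_survival 1
  have hint_double : IntegrableOn (fun z => S (2 * z)) (Ioi 0) := by
    rw [integrableOn_Ioi_comp_mul_left_iff S 0 two_pos, mul_zero]
    exact hS.integrableOn_survival
  calc (∫ z in Ioi (0 : ℝ), S z) / 2 = ∫ z in Ioi (0 : ℝ), S (2 * z) := by
        rw [integral_comp_mul_left_Ioi S 0 two_pos, mul_zero, smul_eq_mul, inv_mul_eq_div]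
    _ ≤ ∫ z in Ioi (0 : ℝ), S z ^ 2 :=
        setIntegral_mono_on hint_double hint_sq measurableSet_Ioi fun z hz => by
          simpa [hS.survival_zero] using hS.survival_mul_survival_le_sq_midpoint le_rfl
            (mul_nonneg zero_le_two (mem_Ioi.1 hz).le)

end IsMHRSurvival

namespace IsMonopolyPrice

variable {S f : ℝ → ℝ} {y p : ℝ}

theorem sub_eq_survival_div_density (hp : IsMonopolyPrice S f y p) : p - y = S p / f p := by
  linarith [hp.virtualValue_eq]

theorem lt (hp : IsMonopolyPrice S f y p) (hS : IsMHRSurvival S f) : y < p := by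
  rw [← sub_pos, hp.sub_eq_survival_div_density]
  exact div_pos (hS.survival_pos p hp.nonneg) (hS.density_pos p hp.nonneg)

theorem hazard_eq (hp : IsMonopolyPrice S f y p) : f p / S p = (p - y)⁻¹ := by
  rw [hp.sub_eq_survival_div_density, inv_div]

theorem mono {y' p' : ℝ} (hp : IsMonopolyPrice S f y p) (hp' : IsMonopolyPrice S f y' p')
    (hS : IsMHRSurvival S f) (hy : y ≤ y') : p ≤ p' := by
  by_contra! hlt
  have hazard_le : (p' - y')⁻¹ ≤ (p - y)⁻¹ := by
    rw [← hp.hazard_eq, ← hp'.hazard_eq]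
    exact hS.monotoneOn_hazard hp'.nonneg hp.nonneg hlt.le
  have := (inv_le_inv₀ (sub_pos.2 (hp'.lt hS)) (sub_pos.2 (hp.lt hS))).1 hazard_le
  linarith

theorem profit_le {q : ℝ} (hp : IsMonopolyPrice S f y p) (hS : IsMHRSurvival S f) (hq : 0 ≤ q) :
    (q - y) * S q ≤ (p - y) * S p := by
  have hmargin : 0 < p - y := sub_pos.2 (hp.lt hS)
  set t := (q - y) / (p - y) with ht
  have hSq : S q ≤ S p * exp (1 - t) := by
    have h := hS.survival_le_mul_exp_hazard hp.nonneg hq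
    rwa [hp.hazard_eq, show (p - y)⁻¹ * (p - q) = 1 - t by rw [ht]; field_simp; ring] at h
  have ht_le : t ≤ exp (t - 1) := by linarith [add_one_le_exp (t - 1)]
  calc (q - y) * S q = (p - y) * (t * S q) := by rw [ht]; field_simp
    _ ≤ (p - y) * (exp (t - 1) * (S p * exp (1 - t))) := by
        gcongr
        exact (hS.survival_pos q hq).le
    _ = (p - y) * S p := by
        rw [mul_left_comm (exp _), ← exp_add, sub_add_sub_cancel, sub_self, exp_zero, mul_one]

theorem survival_le_mul_exp_one (hp : IsMonopolyPrice S f y p) (hS : IsMHRSurvival S f)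
    (hy : 0 ≤ y) : S y ≤ S p * exp 1 := by
  have h := hS.survival_le_mul_exp_hazard hp.nonneg hy
  rwa [hp.hazard_eq, inv_mul_cancel₀ (sub_pos.2 (hp.lt hS)).ne'] at h

theorem norm_surplus_le {r : ℝ} (hp : IsMonopolyPrice S f y p) (hr : IsMonopolyPrice S f 0 r)
    (hS : IsMHRSurvival S f) (hy : 0 ≤ y) : ‖(p - y) * S p‖ ≤ r * S r := by
  have hSp_nonneg : 0 ≤ S p := (hS.survival_pos p hp.nonneg).le
  rw [norm_of_nonneg (mul_nonneg (sub_nonneg.2 (hp.lt hS).le) hSp_nonneg)]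
  calc (p - y) * S p ≤ (p - 0) * S p := by gcongr
    _ ≤ (r - 0) * S r := hr.profit_le hS hp.nonneg
    _ = r * S r := by rw [sub_zero]

theorem excess_ge {R : ℝ} (hp : IsMonopolyPrice S f y p) (hS : IsMHRSurvival S f) (hy : 0 ≤ y)
    (hR : 0 ≤ R) : (exp 1)⁻¹ * (y * S y) + (1 - S y) * R ≤ y * S p + (1 - S p) * R := by
  have hsurvival : (exp 1)⁻¹ * S y ≤ S p :=
    (inv_mul_le_iff₀' (exp_pos 1)).2 (hp.survival_le_mul_exp_one hS hy)
  have hsurvival_le : S p ≤ S y := hS.antitoneOn hy hp.nonneg (hp.lt hS).le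
  rw [mul_left_comm]
  gcongr

theorem integral_survival_le (hp : IsMonopolyPrice S f 0 p) (hS : IsMHRSurvival S f) :
    ∫ z in Ioi (0 : ℝ), S z ≤ exp 1 * (p * S p) := by
  have hp_pos : 0 < p := hp.lt hS
  have hrate : -p⁻¹ < 0 := neg_lt_zero.2 (inv_pos.2 hp_pos)
  have tangent : ∀ z, 0 ≤ z → S z ≤ S p * exp 1 * exp (-p⁻¹ * z) := fun z hz => by
    have h := hS.survival_le_mul_exp_hazard hp.nonneg hz
    rwa [hp.hazard_eq, sub_zero, show p⁻¹ * (p - z) = 1 + -p⁻¹ * z by field_simp; ring, exp_add,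
      ← mul_assoc] at h
  calc ∫ z in Ioi (0 : ℝ), S z ≤ ∫ z in Ioi (0 : ℝ), S p * exp 1 * exp (-p⁻¹ * z) :=
        setIntegral_mono_on hS.integrableOn_survival
          ((integrableOn_exp_mul_Ioi hrate 0).const_mul _) measurableSet_Ioi
          fun z hz => tangent z (mem_Ioi.1 hz).le
    _ = S p * exp 1 * p := by
        rw [integral_const_mul, integral_exp_mul_Ioi hrate, mul_zero, exp_zero, neg_div_neg_eq,
          one_div, inv_inv]
    _ = exp 1 * (p * S p) := by ring

end IsMonopolyPrice

namespace IsMHRSurvival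

variable {S f ψ : ℝ → ℝ}

theorem monotoneOn_monopolyPrice (hS : IsMHRSurvival S f)
    (hψ : ∀ z, 0 ≤ z → IsMonopolyPrice S f z (ψ z)) : MonotoneOn ψ (Ici 0) :=
  fun y hy z hz hyz => (hψ y hy).mono (hψ z hz) hS hyz

theorem integrableOn_survival_monopolyPrice_mul {g : ℝ → ℝ} (hS : IsMHRSurvival S f)
    (hψ : ∀ z, 0 ≤ z → IsMonopolyPrice S f z (ψ z)) (hg : IntegrableOn g (Ioi 0)) :
    IntegrableOn (fun z => S (ψ z) * g z) (Ioi 0) :=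
  hS.integrableOn_survival_comp_mul (hS.monotoneOn_monopolyPrice hψ) (fun z hz => (hψ z hz).nonneg)
    hg

theorem integrableOn_surplus (hS : IsMHRSurvival S f)
    (hψ : ∀ z, 0 ≤ z → IsMonopolyPrice S f z (ψ z)) :
    IntegrableOn (fun z => (ψ z - z) * S (ψ z) * f z) (Ioi 0) := by
  have hψ_meas : AEMeasurable ψ (volume.restrict (Ioi 0)) := aemeasurable_restrict_of_monotoneOn
    measurableSet_Ioi ((hS.monotoneOn_monopolyPrice hψ).mono Ioi_subset_Ici_self)
  have hint := hS.integrableOn_survival_monopolyPrice_mul hψ hS.integrableOn_density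
  refine Integrable.mono' (hS.integrableOn_density.const_mul (ψ 0 * S (ψ 0))) ?_ ?_
  · simp only [mul_assoc]
    exact (hψ_meas.sub aemeasurable_id).aestronglyMeasurable.mul hint.aestronglyMeasurable
  · filter_upwards [ae_restrict_mem measurableSet_Ioi] with z hz
    have hz_nonneg : 0 ≤ z := (mem_Ioi.1 hz).le
    have hf_nonneg : 0 ≤ f z := (hS.density_pos z hz_nonneg).le
    rw [norm_mul, norm_of_nonneg hf_nonneg]
    exact mul_le_mul_of_nonneg_right
      ((hψ z hz_nonneg).norm_surplus_le (hψ 0 le_rfl) hS hz_nonneg) hf_nonneg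

theorem integrableOn_excess (hS : IsMHRSurvival S f)
    (hψ : ∀ z, 0 ≤ z → IsMonopolyPrice S f z (ψ z))
    (hmean : IntegrableOn (fun z => z * f z) (Ioi 0)) (R : ℝ) :
    IntegrableOn (fun z => (z * S (ψ z) + (1 - S (ψ z)) * R) * f z) (Ioi 0) := by
  have hint := hS.integrableOn_survival_monopolyPrice_mul hψ hS.integrableOn_density
  refine ((hS.integrableOn_survival_monopolyPrice_mul hψ hmean).add
    ((hS.integrableOn_density.sub hint).const_mul R)).congr_fun (fun z _ => ?_) measurableSet_Ioi
  simp only [Pi.add_apply, Pi.sub_apply]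
  ring

theorem integral_revenue_eq_surplus_add_excess (hS : IsMHRSurvival S f)
    (hψ : ∀ z, 0 ≤ z → IsMonopolyPrice S f z (ψ z))
    (hmean : IntegrableOn (fun z => z * f z) (Ioi 0)) (R : ℝ) :
    ∫ z in Ioi (0 : ℝ), (ψ z * S (ψ z) + (1 - S (ψ z)) * R) * f z =
      (∫ z in Ioi (0 : ℝ), (ψ z - z) * S (ψ z) * f z) +
        ∫ z in Ioi (0 : ℝ), (z * S (ψ z) + (1 - S (ψ z)) * R) * f z := by
  rw [← integral_add (hS.integrableOn_surplus hψ) (hS.integrableOn_excess hψ hmean R)]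
  congr with z
  ring

theorem integral_excess_ge (hS : IsMHRSurvival S f)
    (hψ : ∀ z, 0 ≤ z → IsMonopolyPrice S f z (ψ z))
    (hmean : IntegrableOn (fun z => z * f z) (Ioi 0)) {R : ℝ} (hR : 0 ≤ R) :
    (exp 1)⁻¹ * ((∫ z in Ioi (0 : ℝ), S z ^ 2) / 2) + R / 2 ≤
      ∫ z in Ioi (0 : ℝ), (z * S (ψ z) + (1 - S (ψ z)) * R) * f z := by
  have hint_mean : IntegrableOn (fun z => S z * (z * f z)) (Ioi 0) := by
    simpa only [pow_one] using hS.integrableOn_survival_pow_mul hmean 1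
  have hint_survival : IntegrableOn (fun z => S z * f z) (Ioi 0) := by
    simpa only [pow_one] using hS.integrableOn_survival_pow_mul hS.integrableOn_density 1
  have hint_reserve : IntegrableOn (fun z => R * (f z - S z * f z)) (Ioi 0) :=
    (hS.integrableOn_density.sub hint_survival).const_mul R
  have integral_density : ∫ z in Ioi (0 : ℝ), f z = 1 := by
    simpa using hS.integral_survival_pow_mul_density 0
  have integral_survival_mul_density : ∫ z in Ioi (0 : ℝ), S z * f z = 1 / 2 := by
    simpa [one_add_one_eq_two] using hS.integral_survival_pow_mul_density 1
  have integral_survival_mul_mean :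
      ∫ z in Ioi (0 : ℝ), S z * (z * f z) = (∫ z in Ioi (0 : ℝ), S z ^ 2) / 2 := by
    simpa [one_add_one_eq_two] using hS.integral_survival_pow_mul_id_mul_density hmean 1
  calc (exp 1)⁻¹ * ((∫ z in Ioi (0 : ℝ), S z ^ 2) / 2) + R / 2
      = ∫ z in Ioi (0 : ℝ), ((exp 1)⁻¹ * (S z * (z * f z)) + R * (f z - S z * f z)) := by
        rw [integral_add (hint_mean.const_mul _) hint_reserve, integral_const_mul,
          integral_const_mul, integral_sub hS.integrableOn_density hint_survival,
          integral_density, integral_survival_mul_density, integral_survival_mul_mean]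
        ring
    _ ≤ ∫ z in Ioi (0 : ℝ), (z * S (ψ z) + (1 - S (ψ z)) * R) * f z :=
        setIntegral_mono_on ((hint_mean.const_mul _).add hint_reserve)
          (hS.integrableOn_excess hψ hmean R) measurableSet_Ioi fun z hz => by
            have hz_nonneg : 0 ≤ z := (mem_Ioi.1 hz).le
            have := mul_le_mul_of_nonneg_right ((hψ z hz_nonneg).excess_ge hS hz_nonneg hR)
              (hS.density_pos z hz_nonneg).le
            linarith

theorem mean_le_integral_excess (hS : IsMHRSurvival S f)
    (hψ : ∀ z, 0 ≤ z → IsMonopolyPrice S f z (ψ z))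
    (hmean : IntegrableOn (fun z => z * f z) (Ioi 0)) :
    3 / (4 * exp 1) * ∫ z in Ioi (0 : ℝ), z * f z ≤
      ∫ z in Ioi (0 : ℝ), (z * S (ψ z) + (1 - S (ψ z)) * (ψ 0 * S (ψ 0))) * f z := by
  have hreserve := hψ 0 le_rfl
  have mean_eq : ∫ z in Ioi (0 : ℝ), z * f z = ∫ z in Ioi (0 : ℝ), S z := by
    simpa using hS.integral_survival_pow_mul_id_mul_density hmean 0
  calc 3 / (4 * exp 1) * ∫ z in Ioi (0 : ℝ), z * f z
      = (exp 1)⁻¹ * ((∫ z in Ioi (0 : ℝ), S z) / 2 / 2) +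
          (exp 1)⁻¹ * (∫ z in Ioi (0 : ℝ), S z) / 2 := by rw [mean_eq]; ring
    _ ≤ (exp 1)⁻¹ * ((∫ z in Ioi (0 : ℝ), S z ^ 2) / 2) + ψ 0 * S (ψ 0) / 2 := by
        gcongr (exp 1)⁻¹ * (?_ / 2) + ?_ / 2
        · exact hS.half_integral_survival_le_integral_sq
        · exact (inv_mul_le_iff₀ (exp_pos 1)).2 (hreserve.integral_survival_le hS)
    _ ≤ ∫ z in Ioi (0 : ℝ), (z * S (ψ z) + (1 - S (ψ z)) * (ψ 0 * S (ψ 0))) * f z :=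
        hS.integral_excess_ge hψ hmean
          (mul_nonneg hreserve.nonneg (hS.survival_pos _ hreserve.nonneg).le)

end IsMHRSurvival

theorem stmt_7
(f F : ℝ → ℝ)
    (hf_cont : ContinuousOn f (Ici 0))
    (hf_pos : ∀ z ∈ Ici (0:ℝ), 0 < f z)
    (hF : ∀ z ∈ Ici (0:ℝ), F z = ∫ t in (0:ℝ)..z, f t)
    (hF_lt : ∀ z ∈ Ici (0:ℝ), F z < 1)
    (hprob : ∫ z in Ioi (0:ℝ), f z = 1)
(hMHR : ∀ y z : ℝ, 0 ≤ y → y ≤ z → f y / (1 - F y) ≤ f z / (1 - F z))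
(φ ψ : ℝ → ℝ)
    (hφ : ∀ z ∈ Ici (0:ℝ), φ z = z - (1 - F z) / f z)
    (hφ_mono : StrictMonoOn φ (Ici 0))
    (hφ_top : Filter.Tendsto φ Filter.atTop Filter.atTop)
    (hψ : ∀ y ∈ Ici (0:ℝ), ψ y ∈ Ici (0:ℝ) ∧ φ (ψ y) = y)
(hmean : IntegrableOn (fun z => z * f z) (Ioi 0)) :
    ∫ z in Ioi (0:ℝ), (ψ z * (1 - F (ψ z)) + F (ψ z) * (ψ 0 * (1 - F (ψ 0)))) * f z
      ≥ (∫ z in Ioi (0:ℝ), (ψ z - z) * (1 - F (ψ z)) * f z)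
        + (3 / (4 * Real.exp 1)) * ∫ z in Ioi (0:ℝ), z * f z := by
  have hS : IsMHRSurvival (fun z => 1 - F z) f :=
    isMHRSurvival_one_sub_cdf hf_cont hf_pos hF hF_lt hMHR
  have hprice : ∀ z, 0 ≤ z → IsMonopolyPrice (fun z => 1 - F z) f z (ψ z) := fun z hz =>
    ⟨(hψ z hz).1, (hφ _ (hψ z hz).1).symm.trans (hψ z hz).2⟩
  have revenue_eq := hS.integral_revenue_eq_surplus_add_excess hprice hmean
    (ψ 0 * (1 - F (ψ 0)))
  have excess_ge := hS.mean_le_integral_excess hprice hmean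
  simp only [sub_sub_cancel] at revenue_eq excess_ge
  rw [revenue_eq]
  gcongr
end
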